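/- Let X be an invertible n×n matrix over a field and i,j indices with i+j > n+1; set i' = n+1-i. Define Y_{ij} as the j×j matrix whose first i' rows are the last i' rows of X restricted to columns 1,…,j, and whose remaining j−i' rows are the last j−i' rows of adjugate(X) restricted to columns 1,…,j. Then for every upper unitriangular matrix g whose off-diagonal support lies in columns indexed above j (i.e., right multiplication by g does not mix columns 1,…,j nontrivially), det Y_{ij}(X·g) = det Y_{ij}(X). -/

import Mathlib

/-- 1-based i, j with i + j > n + 1, i' = n + 1 - i: the determinant of the
j×j matrix Y_{ij}(X), whose first i' rows are the last i' rows of X on columns 1,…,j and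
whose remaining j - i' rows are the last j - i' rows of adjugate(X) on columns 1,…,j, is
unchanged under X ↦ X·g for every upper unitriangular g with off-diagonal support in
columns > j. -/
theorem stmt16 {K : Type*} [Field K] {n : ℕ} (i j : ℕ)
    (hi1 : 1 ≤ i) (hi2 : i ≤ n) (hj : j ≤ n) (hij : n + 1 < i + j)
    (X g : Matrix (Fin n) (Fin n) K) (hX : IsUnit X.det)
    (hdiag : ∀ s, g s s = 1)
    (hlow : ∀ s t : Fin n, t < s → g s t = 0)
    (hsupp : ∀ s t : Fin n, s ≠ t → g s t ≠ 0 → j ≤ (t : ℕ)) :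
    (Matrix.of (fun s t : Fin j =>
      if hs : s.val < n + 1 - i then
        (X * g) (⟨n - (n + 1 - i) + s.val, by have := s.isLt; omega⟩ : Fin n)
                (⟨t.val, by have := t.isLt; omega⟩ : Fin n)
      else
        (X * g).adjugate
          (⟨n - (j - (n + 1 - i)) + (s.val - (n + 1 - i)), by have := s.isLt; omega⟩ : Fin n)
          (⟨t.val, by have := t.isLt; omega⟩ : Fin n))).det
    = (Matrix.of (fun s t : Fin j =>
      if hs : s.val < n + 1 - i then
        X (⟨n - (n + 1 - i) + s.val, by have := s.isLt; omega⟩ : Fin n)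
          (⟨t.val, by have := t.isLt; omega⟩ : Fin n)
      else
        X.adjugate
          (⟨n - (j - (n + 1 - i)) + (s.val - (n + 1 - i)), by have := s.isLt; omega⟩ : Fin n)
          (⟨t.val, by have := t.isLt; omega⟩ : Fin n))).det := by
  have hT : g.BlockTriangular id := fun s t h => hlow s t h
  have hdet : g.det = 1 := by
    rw [Matrix.det_of_upperTriangular hT]; simp [hdiag]
  have hga : g * g.adjugate = 1 := by rw [Matrix.mul_adjugate, hdet, one_smul]
  have hinv : g⁻¹ = g.adjugate := Matrix.inv_eq_right_inv hga
  have hU : g.adjugate.BlockTriangular id := by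
    haveI : Invertible g := Matrix.invertibleOfIsUnitDet g (by rw [hdet]; exact isUnit_one)
    rw [← hinv]
    exact Matrix.blockTriangular_inv_of_blockTriangular hT
  have hUd : ∀ s, g.adjugate s s = 1 := by
    intro s
    have h := congrFun (congrFun hga s) s
    rw [Matrix.mul_apply, Finset.sum_eq_single s] at h
    · simpa [hdiag] using h
    · intro b _ hb
      rcases lt_or_gt_of_ne hb with h1 | h1
      · rw [hlow s b h1, zero_mul]
      · rw [hU h1, mul_zero]
    · simp
  have hcol : ∀ (r t : Fin n), t.val < j → (X * g) r t = X r t := by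
    intro r t ht
    rw [Matrix.mul_apply, Finset.sum_eq_single t]
    · rw [hdiag, mul_one]
    · intro b _ hb
      have : g b t = 0 := by
        by_contra h
        have := hsupp b t hb h
        omega
      rw [this, mul_zero]
    · simp
  let e : Fin j → Fin n := fun s => ⟨n - j + s.val, by have := s.isLt; omega⟩
  have he : ∀ s, (e s).val = n - j + s.val := fun s => rfl
  let P : Matrix (Fin j) (Fin j) K := Matrix.of fun s u =>
    if s.val < n + 1 - i then (if s = u then 1 else 0) else g.adjugate (e s) (e u)
  have hP : P.det = 1 := by
    rw [Matrix.det_of_upperTriangular]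
    · apply Finset.prod_eq_one
      intro s _
      simp only [P, Matrix.of_apply, hUd]
      simp
    · intro s u hus
      have hus' : u < s := hus
      simp only [P, Matrix.of_apply]
      split_ifs with h1 h2
      · exact absurd h2 hus'.ne'
      · rfl
      · apply hU
        show e u < e s
        rw [Fin.lt_def, he, he]
        have := Fin.lt_def.1 hus'
        omega
  conv_rhs => rw [← one_mul (Matrix.det _), ← hP, ← Matrix.det_mul]
  congr 1
  ext s t
  rw [Matrix.mul_apply]
  simp only [Matrix.of_apply, P]
  have hs := s.isLt
  have ht := t.isLt
  by_cases h : s.val < n + 1 - i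
  · simp only [h, if_true, dif_pos, ite_mul, one_mul, zero_mul, Finset.sum_ite_eq,
      Finset.mem_univ]
    exact hcol _ _ ht
  · simp only [h, if_false, dif_neg, not_false_eq_true]
    have hes : (⟨n - (j - (n + 1 - i)) + (s.val - (n + 1 - i)), by omega⟩ : Fin n) = e s := by
      apply Fin.ext
      simp only [he]
      omega
    rw [hes, Matrix.adjugate_mul_distrib, Matrix.mul_apply]
    symm
    apply Finset.sum_of_injOn e
    · intro a _ b _ hab
      have := congrArg Fin.val hab
      rw [he, he] at this
      apply Fin.ext
      omega
    · intro a _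
      simp
    · intro u _ hu
      have : u < e s := by
        by_contra hlt
        apply hu
        rw [Fin.lt_def, he] at hlt
        refine ⟨⟨u.val - (n - j), by omega⟩, by simp, ?_⟩
        apply Fin.ext
        rw [he]
        simp only
        omega
      rw [hU this, zero_mul]
    · intro u _
      have hu := u.isLt
      by_cases h1 : u.val < n + 1 - i
      · have : e u < e s := by
          rw [Fin.lt_def, he, he]
          omega
        rw [hU this, zero_mul, zero_mul]
      · rw [dif_neg h1]
        congr 2
        apply Fin.ext
        simp only [he]
        omega
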